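/- For any positive masses m₁, m₂, m₃, m₄, any two sequentially-ordered co-circular planar central configurations are similar. Precisely: suppose q = (q₁,...,q₄) and q' = (q'₁,...,q'₄) are quadruples of pairwise distinct points in ℝ² with Σ m_i q_i = 0 and Σ m_i q'_i = 0, each satisfying the central configuration equations λ m_i q_i = Σ_{j≠i} m_i m_j (q_j − q_i)/‖q_j − q_i‖³ (for some λ ∈ ℝ, respectively λ' ∈ ℝ), each lying on a common circle, and each satisfying Ptolemy's equality ‖q₁−q₂‖‖q₃−q₄‖ + ‖q₁−q₄‖‖q₂−q₃‖ = ‖q₁−q₃‖‖q₂−q₄‖ (i.e. the bodies are ordered sequentially on the circle). Then there exist a nonzero real number k and a linear isometry R of ℝ² such that q'_i = k R q_i for i = 1, 2, 3, 4. -/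

import Mathlib

open Finset

/-!
By the inscribed angle theorem the distances between concyclic points are, up to a common factor,
the absolute values of the areas `ω (w i) (w j)` spanned by unit vectors `w i` at half the polar
angles. This turns the central configuration equations into the Lagrange conditions for the six
mutual distances to be critical under Ptolemy's equality alone, with a multiplier `κ` that has to be
positive.

Rescale one of two solutions so that both have the same net force law `φ`, with a common coefficient
`μ` of the centrifugal term. Multiply each Lagrange condition by its distance and pair the
difference between the two solutions with the difference of the logarithms of the distances. Since
`r * φ r` is strictly decreasing, every contribution is nonpositive and vanishes only if the
distances agree; but Ptolemy's equality and the log-sum inequality make the total nonnegative. So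
the solutions are congruent, and congruent configurations with the same center of mass differ by a
linear isometry.
-/

section Congruence

variable {𝕜 V : Type*} [RCLike 𝕜] [NormedAddCommGroup V] [InnerProductSpace 𝕜 V]
  [FiniteDimensional 𝕜 V]

theorem exists_linearIsometryEquiv_apply_eq {E : Type*} [AddCommGroup E] [Module 𝕜 E]
    (f g : E →ₗ[𝕜] V) (h : ∀ c, ‖f c‖ = ‖g c‖) : ∃ R : V ≃ₗᵢ[𝕜] V, ∀ c, R (f c) = g c := by
  obtain ⟨s, hs⟩ := f.rangeRestrict.exists_rightInverse_of_surjective f.range_rangeRestrict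
  have hfs (x : f.range) : f (s x) = x := congrArg Subtype.val (LinearMap.congr_fun hs x)
  let L : f.range →ₗᵢ[𝕜] V := ⟨g ∘ₗ s, fun x ↦ by
    rw [LinearMap.comp_apply, ← h, hfs, Submodule.coe_norm]⟩
  have hL (c : E) : L (f.rangeRestrict c) = g c := by
    rw [← sub_eq_zero]
    change g (s (f.rangeRestrict c)) - g c = 0
    rw [← map_sub, ← norm_eq_zero, ← h, map_sub, hfs]
    simp
  exact ⟨L.extend.toLinearIsometryEquiv rfl, fun c ↦
    (L.extend_apply (f.rangeRestrict c)).trans (hL c)⟩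

theorem exists_linearIsometryEquiv_of_inner_eq {ι : Type*} (v w : ι → V)
    (h : ∀ i j, inner 𝕜 (v i) (v j) = inner 𝕜 (w i) (w j)) :
    ∃ R : V ≃ₗᵢ[𝕜] V, ∀ i, R (v i) = w i := by
  have hnorm (c : ι →₀ 𝕜) :
      ‖Finsupp.linearCombination 𝕜 v c‖ = ‖Finsupp.linearCombination 𝕜 w c‖ := by
    simp only [norm_eq_sqrt_re_inner (𝕜 := 𝕜), Finsupp.linearCombination_apply, Finsupp.sum_inner,
      Finsupp.inner_sum, inner_smul_left, inner_smul_right, h]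
  obtain ⟨R, hR⟩ := exists_linearIsometryEquiv_apply_eq _ _ hnorm
  exact ⟨R, fun i ↦ by simpa using hR (Finsupp.single i 1)⟩

end Congruence

section Barycenter

variable {ι V : Type*} [Fintype ι] [NormedAddCommGroup V] [InnerProductSpace ℝ V] {v w : ι → V}

theorem inner_sum_smul_eq_of_congruent (h : Congruent v w) {a b : ι → ℝ}
    (ha : ∑ i, a i = 0) (hb : ∑ i, b i = 0) :
    inner ℝ (∑ i, a i • v i) (∑ i, b i • v i) = inner ℝ (∑ i, a i • w i) (∑ i, b i • w i) := by
  simp only [inner_sum_smul_sum_smul_of_sum_eq_zero _ ha _ hb, ← dist_eq_norm, h.dist_eq]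

theorem inner_eq_of_congruent {m : ι → ℝ} (hm : ∑ i, m i ≠ 0)
    (hv : ∑ i, m i • v i = 0) (hw : ∑ i, m i • w i = 0) (h : Congruent v w) (i j : ι) :
    inner ℝ (v i) (v j) = inner ℝ (w i) (w j) := by
  classical
  -- `a i` is the point mass at `i` minus the normalized mass distribution, of total weight zero.
  let a (i k : ι) : ℝ := (Pi.single i 1 : ι → ℝ) k - (∑ l, m l)⁻¹ * m k
  have ha (i : ι) : ∑ k, a i k = 0 := by simp [a, ← mul_sum, hm]
  have hpoint {u : ι → V} (hu : ∑ i, m i • u i = 0) (i : ι) : ∑ k, a i k • u k = u i := by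
    simp [a, sub_smul, mul_smul, ← smul_sum, hu, Pi.single_apply, ite_smul]
  simpa only [hpoint hv, hpoint hw] using inner_sum_smul_eq_of_congruent h (ha i) (ha j)

theorem exists_linearIsometryEquiv_of_congruent [FiniteDimensional ℝ V] {m : ι → ℝ}
    (hm : ∑ i, m i ≠ 0) (hv : ∑ i, m i • v i = 0) (hw : ∑ i, m i • w i = 0)
    (h : Congruent v w) : ∃ R : V ≃ₗᵢ[ℝ] V, ∀ i, R (v i) = w i :=
  exists_linearIsometryEquiv_of_inner_eq v w (inner_eq_of_congruent hm hv hw h)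

end Barycenter

section LogInequalities

theorem sub_mul_sub_neg {α : Type*} [LinearOrder α] {f g : α → ℝ} {s : Set α}
    (hf : StrictAntiOn f s) (hg : StrictMonoOn g s) {x y : α} (hx : x ∈ s) (hy : y ∈ s)
    (hxy : x ≠ y) : (f x - f y) * (g x - g y) < 0 := by
  rcases hxy.lt_or_gt with h | h
  · exact mul_neg_of_pos_of_neg (sub_pos.2 (hf hx hy h)) (sub_neg.2 (hg hx hy h))
  · exact mul_neg_of_neg_of_pos (sub_neg.2 (hf hy hx h)) (sub_pos.2 (hg hy hx h))

theorem sum_mul_log_div_sum_le {ι : Type*} {s : Finset ι} {a b : ι → ℝ} (hs : s.Nonempty)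
    (ha : ∀ i ∈ s, 0 ≤ a i) (hb : ∀ i ∈ s, 0 < b i) :
    (∑ i ∈ s, a i) * Real.log ((∑ i ∈ s, a i) / ∑ i ∈ s, b i) ≤
      ∑ i ∈ s, a i * Real.log (a i / b i) := by
  have hB : 0 < ∑ i ∈ s, b i := sum_pos hb hs
  have hcancel (i : ι) (hi : i ∈ s) (t : ℝ) :
      b i / (∑ j ∈ s, b j) * (a i / b i * t) = a i * t / ∑ j ∈ s, b j := by
    field_simp [(hb i hi).ne']
  have hmean : ∑ i ∈ s, b i / (∑ j ∈ s, b j) * (a i / b i) = (∑ i ∈ s, a i) / ∑ i ∈ s, b i := by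
    rw [sum_div]
    exact sum_congr rfl fun i hi ↦ by simpa using hcancel i hi 1
  have jensen := Real.convexOn_mul_log.map_sum_le (t := s) (w := fun i ↦ b i / ∑ j ∈ s, b j)
    (p := fun i ↦ a i / b i) (fun i hi ↦ div_nonneg (hb i hi).le hB.le)
    (by rw [← sum_div, div_self hB.ne']) (fun i hi ↦ div_nonneg (ha i hi) (hb i hi).le)
  simp only [smul_eq_mul, hmean] at jensen
  rwa [sum_congr rfl fun i hi ↦ hcancel i hi _, ← sum_div, div_mul_eq_mul_div,
    div_le_div_iff_of_pos_right hB] at jensen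

theorem add_mul_log_sub_log_add_le {a b a' b' : ℝ} (ha : 0 < a) (hb : 0 < b) (ha' : 0 < a')
    (hb' : 0 < b') :
    (a + b) * (Real.log (a + b) - Real.log (a' + b')) ≤
      a * (Real.log a - Real.log a') + b * (Real.log b - Real.log b') := by
  have := sum_mul_log_div_sum_le (a := ![a, b]) (b := ![a', b']) (s := univ) univ_nonempty
    (by simp [Fin.forall_fin_two, ha.le, hb.le]) (by simp [Fin.forall_fin_two, ha', hb'])
  simpa [Fin.sum_univ_two, Real.log_div, ha.ne', hb.ne', ha'.ne', hb'.ne', (add_pos ha hb).ne',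
    (add_pos ha' hb').ne'] using this

theorem mul_add_sub_mul_add_mul_log_le {a b a' b' κ κ' : ℝ} (hκ : 0 ≤ κ) (hκ' : 0 ≤ κ')
    (ha : 0 < a) (hb : 0 < b) (ha' : 0 < a') (hb' : 0 < b') :
    (κ * (a + b) - κ' * (a' + b')) * (Real.log (a + b) - Real.log (a' + b')) ≤
    (κ * a - κ' * a') * (Real.log a - Real.log a') +
      (κ * b - κ' * b') * (Real.log b - Real.log b') := by
  have h := mul_le_mul_of_nonneg_left (add_mul_log_sub_log_add_le ha hb ha' hb') hκ
  have h' := mul_le_mul_of_nonneg_left (add_mul_log_sub_log_add_le ha' hb' ha hb) hκ'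
  linarith

end LogInequalities

/-- The Lagrange condition, with multiplier `κ`, for the lengths `x`, `y` of two opposite edges of a
quadrilateral under a constraint involving them through the product `x * y`. The force law is `φ`;
the weights `u`, `v` are the products of the masses at the ends of the respective edges. -/
structure IsBalanced (φ : ℝ → ℝ) (u v κ x y : ℝ) : Prop where
  fst : u * φ x = κ * y
  snd : v * φ y = κ * x

namespace IsBalanced

theorem symm {φ : ℝ → ℝ} {u v κ x y : ℝ} (h : IsBalanced φ u v κ x y) :
    IsBalanced φ v u κ y x :=
  ⟨h.snd, h.fst⟩

variable {φ : ℝ → ℝ} {u v κ κ' x y x' y' : ℝ}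

theorem multiplier_sub_mul_log_sub_neg (hφ : StrictAntiOn (fun r ↦ r * φ r) (Set.Ioi 0))
    (h : IsBalanced φ u v κ x y) (h' : IsBalanced φ u v κ' x' y') (hu : 0 < u)
    (hx : 0 < x) (hx' : 0 < x') (hne : x ≠ x') :
    (κ * (x * y) - κ' * (x' * y')) * (Real.log x - Real.log x') < 0 := by
  have hmono := mul_neg_of_pos_of_neg hu
    (sub_mul_sub_neg hφ Real.strictMonoOn_log hx hx' hne)
  calc (κ * (x * y) - κ' * (x' * y')) * (Real.log x - Real.log x')
      = u * ((x * φ x - x' * φ x') * (Real.log x - Real.log x')) := by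
        linear_combination (x' * h'.fst - x * h.fst) * (Real.log x - Real.log x')
    _ < 0 := hmono

theorem multiplier_sub_mul_log_sub_nonpos (hφ : StrictAntiOn (fun r ↦ r * φ r) (Set.Ioi 0))
    (h : IsBalanced φ u v κ x y) (h' : IsBalanced φ u v κ' x' y') (hu : 0 < u)
    (hx : 0 < x) (hx' : 0 < x') :
    (κ * (x * y) - κ' * (x' * y')) * (Real.log x - Real.log x') ≤ 0 := by
  rcases eq_or_ne x x' with rfl | hne
  · simp
  · exact (h.multiplier_sub_mul_log_sub_neg hφ h' hu hx hx' hne).le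

theorem multiplier_sub_mul_log_mul_sub_nonpos
    (hφ : StrictAntiOn (fun r ↦ r * φ r) (Set.Ioi 0))
    (h : IsBalanced φ u v κ x y) (h' : IsBalanced φ u v κ' x' y') (hu : 0 < u) (hv : 0 < v)
    (hx : 0 < x) (hy : 0 < y) (hx' : 0 < x') (hy' : 0 < y') :
    (κ * (x * y) - κ' * (x' * y')) * (Real.log (x * y) - Real.log (x' * y')) ≤ 0 := by
  have hfst := h.multiplier_sub_mul_log_sub_nonpos hφ h' hu hx hx'
  have hsnd := h.symm.multiplier_sub_mul_log_sub_nonpos hφ h'.symm hv hy hy'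
  rw [Real.log_mul hx.ne' hy.ne', Real.log_mul hx'.ne' hy'.ne']
  linarith

theorem eq_of_nonneg (hφ : StrictAntiOn (fun r ↦ r * φ r) (Set.Ioi 0))
    (h : IsBalanced φ u v κ x y) (h' : IsBalanced φ u v κ' x' y') (hu : 0 < u) (hv : 0 < v)
    (hx : 0 < x) (hy : 0 < y) (hx' : 0 < x') (hy' : 0 < y')
    (h₀ : 0 ≤ (κ * (x * y) - κ' * (x' * y')) * (Real.log (x * y) - Real.log (x' * y'))) :
    x = x' ∧ y = y' := by
  rw [Real.log_mul hx.ne' hy.ne', Real.log_mul hx'.ne' hy'.ne'] at h₀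
  have hfst := h.multiplier_sub_mul_log_sub_nonpos hφ h' hu hx hx'
  have hsnd := h.symm.multiplier_sub_mul_log_sub_nonpos hφ h'.symm hv hy hy'
  refine ⟨by_contra fun hne ↦ ?_, by_contra fun hne ↦ ?_⟩
  · linarith [h.multiplier_sub_mul_log_sub_neg hφ h' hu hx hx' hne]
  · linarith [h.symm.multiplier_sub_mul_log_sub_neg hφ h'.symm hv hy hy' hne]

end IsBalanced

/-- Ptolemy's equality, which characterizes concyclic points `q 0, q 1, q 2, q 3` labelled
consecutively along their circle; the diagonals are `02` and `13`. -/
def PtolemyEq {P : Type*} [Dist P] (q : Fin 4 → P) : Prop :=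
  dist (q 0) (q 1) * dist (q 2) (q 3) + dist (q 0) (q 3) * dist (q 1) (q 2) =
    dist (q 0) (q 2) * dist (q 1) (q 3)

/-- The mutual distances of `q` are critical for the force law `φ` among six lengths constrained
only by Ptolemy's equality. The multiplier `κ` changes sign on the diagonals because their product
stands on the other side of the constraint. -/
structure IsPtolemyCritical {P : Type*} [Dist P] (φ : ℝ → ℝ) (m : Fin 4 → ℝ) (κ : ℝ)
    (q : Fin 4 → P) : Prop where
  ptolemy : PtolemyEq q
  sides : IsBalanced φ (m 0 * m 1) (m 2 * m 3) κ (dist (q 0) (q 1)) (dist (q 2) (q 3))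
  sides' : IsBalanced φ (m 0 * m 3) (m 1 * m 2) κ (dist (q 0) (q 3)) (dist (q 1) (q 2))
  diagonals : IsBalanced φ (m 0 * m 2) (m 1 * m 3) (-κ) (dist (q 0) (q 2)) (dist (q 1) (q 3))

theorem pairwise_fin_four_of_symmetric {r : Fin 4 → Fin 4 → Prop} (hr : ∀ i j, r i j → r j i)
    (h01 : r 0 1) (h23 : r 2 3) (h03 : r 0 3) (h12 : r 1 2) (h02 : r 0 2) (h13 : r 1 3) :
    Pairwise r := by
  intro i j hij
  fin_cases i <;> fin_cases j <;> first | exact absurd rfl hij | assumption | exact hr _ _ ‹_›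

namespace IsPtolemyCritical

variable {P P' : Type*} [MetricSpace P] [MetricSpace P'] {φ : ℝ → ℝ} {m : Fin 4 → ℝ} {κ κ' : ℝ}
  {q : Fin 4 → P} {q' : Fin 4 → P'}

theorem congruent (hφ : StrictAntiOn (fun r ↦ r * φ r) (Set.Ioi 0)) (hm : ∀ i, 0 < m i)
    (hκ : 0 ≤ κ) (hκ' : 0 ≤ κ') (hq : Function.Injective q) (hq' : Function.Injective q')
    (h : IsPtolemyCritical φ m κ q) (h' : IsPtolemyCritical φ m κ' q') : Congruent q q' := by
  have hw (i j : Fin 4) : 0 < m i * m j := mul_pos (hm i) (hm j)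
  have hd (i j : Fin 4) (hij : i ≠ j := by decide) : 0 < dist (q i) (q j) :=
    dist_pos.2 (hq.ne hij)
  have hd' (i j : Fin 4) (hij : i ≠ j := by decide) : 0 < dist (q' i) (q' j) :=
    dist_pos.2 (hq'.ne hij)
  have sides := h.sides.multiplier_sub_mul_log_mul_sub_nonpos hφ h'.sides (hw 0 1) (hw 2 3)
    (hd 0 1) (hd 2 3) (hd' 0 1) (hd' 2 3)
  have sides' := h.sides'.multiplier_sub_mul_log_mul_sub_nonpos hφ h'.sides' (hw 0 3) (hw 1 2)
    (hd 0 3) (hd 1 2) (hd' 0 3) (hd' 1 2)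
  have diagonals := h.diagonals.multiplier_sub_mul_log_mul_sub_nonpos hφ h'.diagonals (hw 0 2)
    (hw 1 3) (hd 0 2) (hd 1 3) (hd' 0 2) (hd' 1 3)
  have total := mul_add_sub_mul_add_mul_log_le hκ hκ'
    (mul_pos (hd 0 1) (hd 2 3)) (mul_pos (hd 0 3) (hd 1 2))
    (mul_pos (hd' 0 1) (hd' 2 3)) (mul_pos (hd' 0 3) (hd' 1 2))
  rw [h.ptolemy, h'.ptolemy] at total
  -- The nonpositive contributions of the three pairs of opposite edges add up to at least zero.
  obtain ⟨h01, h23⟩ := h.sides.eq_of_nonneg hφ h'.sides (hw 0 1) (hw 2 3)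
    (hd 0 1) (hd 2 3) (hd' 0 1) (hd' 2 3) (by linarith)
  obtain ⟨h03, h12⟩ := h.sides'.eq_of_nonneg hφ h'.sides' (hw 0 3) (hw 1 2)
    (hd 0 3) (hd 1 2) (hd' 0 3) (hd' 1 2) (by linarith)
  obtain ⟨h02, h13⟩ := h.diagonals.eq_of_nonneg hφ h'.diagonals (hw 0 2) (hw 1 3)
    (hd 0 2) (hd 1 3) (hd' 0 2) (hd' 1 3) (by linarith)
  refine congruent_iff_pairwise_dist_eq.2 ?_
  exact pairwise_fin_four_of_symmetric (fun i j hij ↦ by simpa only [dist_comm] using hij)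
    h01 h23 h03 h12 h02 h13

end IsPtolemyCritical

/-- The force at distance `r` between unit masses that attract by the power law `r ^ (1 - α)` and
repel by `μ * r`; the repulsion plays the role of the centrifugal force of a relative equilibrium.
The form chosen here exhibits the coefficient of the displacement vector. -/
noncomputable def netPull (α μ r : ℝ) : ℝ := (r ^ (-α) - μ) * r

theorem strictAntiOn_mul_netPull {α μ : ℝ} (hα : 2 ≤ α) (hμ : 0 < μ) :
    StrictAntiOn (fun r ↦ r * netPull α μ r) (Set.Ioi 0) := by
  intro x hx y hy hxy
  have hsplit {r : ℝ} (hr : 0 < r) : r * netPull α μ r = r ^ (2 - α) - μ * r ^ 2 := by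
    rw [netPull, sub_eq_add_neg 2 α, Real.rpow_add hr, Real.rpow_two]
    ring
  simp only [hsplit hx, hsplit hy]
  have hrpow : y ^ (2 - α) ≤ x ^ (2 - α) :=
    Real.rpow_le_rpow_of_nonpos hx hxy.le (by linarith)
  have hsq : μ * x ^ 2 < μ * y ^ 2 :=
    mul_lt_mul_of_pos_left (pow_lt_pow_left₀ hxy (le_of_lt hx) two_ne_zero) hμ
  linarith

theorem netPull_mul {k r : ℝ} (hk : 0 < k) (hr : 0 ≤ r) (α μ : ℝ) :
    netPull α μ (k * r) = k ^ (-α) * k * netPull α (μ * k ^ α) r := by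
  rw [netPull, netPull, Real.mul_rpow hk.le hr, Real.rpow_neg hk.le]
  field_simp [(Real.rpow_pos_of_pos hk α).ne']

namespace IsBalanced

variable {α μ u v κ x y : ℝ}

theorem le_rpow (h : IsBalanced (netPull α μ) u v κ x y) (hκ : 0 ≤ κ) (hu : 0 < u) (hx : 0 < x)
    (hy : 0 < y) : μ ≤ x ^ (-α) := by
  have hpull : 0 ≤ u * ((x ^ (-α) - μ) * x) := h.fst.symm ▸ mul_nonneg hκ hy.le
  rwa [mul_nonneg_iff_of_pos_left hu, mul_nonneg_iff_of_pos_right hx, sub_nonneg] at hpull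

theorem rpow_le (h : IsBalanced (netPull α μ) u v κ x y) (hκ : κ ≤ 0) (hu : 0 < u) (hx : 0 < x)
    (hy : 0 < y) : x ^ (-α) ≤ μ := by
  have hpull : u * ((x ^ (-α) - μ) * x) ≤ 0 := h.fst.symm ▸ mul_nonpos_of_nonpos_of_nonneg hκ hy.le
  exact sub_nonpos.1 (nonpos_of_mul_nonpos_left (nonpos_of_mul_nonpos_right hpull hu) hx)

theorem mul {k : ℝ} (h : IsBalanced (netPull α (μ * k ^ α)) u v κ x y) (hk : 0 < k)
    (hx : 0 ≤ x) (hy : 0 ≤ y) :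
    IsBalanced (netPull α μ) u v (κ * k ^ (-α)) (k * x) (k * y) where
  fst := by
    rw [netPull_mul hk hx]
    linear_combination k ^ (-α) * k * h.fst
  snd := by
    rw [netPull_mul hk hy]
    linear_combination k ^ (-α) * k * h.snd

end IsBalanced

namespace IsPtolemyCritical

variable {α μ κ : ℝ} {m : Fin 4 → ℝ}

theorem smul {V : Type*} [NormedAddCommGroup V] [NormedSpace ℝ V] {q : Fin 4 → V} {k : ℝ}
    (h : IsPtolemyCritical (netPull α (μ * k ^ α)) m κ q) (hk : 0 < k) :
    IsPtolemyCritical (netPull α μ) m (κ * k ^ (-α)) (k • q) where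
  ptolemy := by
    simp only [PtolemyEq, Pi.smul_apply, dist_smul₀]
    have hptolemy := h.ptolemy
    rw [PtolemyEq] at hptolemy
    linear_combination ‖k‖ ^ 2 * hptolemy
  sides := by
    simpa only [Pi.smul_apply, dist_smul₀, Real.norm_of_nonneg hk.le] using
      h.sides.mul hk dist_nonneg dist_nonneg
  sides' := by
    simpa only [Pi.smul_apply, dist_smul₀, Real.norm_of_nonneg hk.le] using
      h.sides'.mul hk dist_nonneg dist_nonneg
  diagonals := by
    simpa only [Pi.smul_apply, dist_smul₀, Real.norm_of_nonneg hk.le, neg_mul] using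
      h.diagonals.mul hk dist_nonneg dist_nonneg

variable {P : Type*} [MetricSpace P] {q : Fin 4 → P}

theorem multiplier_pos (hα : 0 < α) (hm : ∀ i, 0 < m i) (hq : Function.Injective q)
    (h : IsPtolemyCritical (netPull α μ) m κ q) : 0 < κ := by
  by_contra! hκ
  have hw (i j : Fin 4) : 0 < m i * m j := mul_pos (hm i) (hm j)
  have hd (i j : Fin 4) (hij : i ≠ j := by decide) : 0 < dist (q i) (q j) :=
    dist_pos.2 (hq.ne hij)
  have hκ' : 0 ≤ -κ := neg_nonneg.2 hκ
  -- If `κ ≤ 0`, no diagonal is longer than a side, contrary to Ptolemy's equality.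
  have h02_le : dist (q 0) (q 2) ≤ dist (q 0) (q 1) :=
    (Real.rpow_le_rpow_iff_of_neg (hd 0 1) (hd 0 2) (neg_neg_of_pos hα)).1 <|
      (h.sides.rpow_le hκ (hw _ _) (hd 0 1) (hd 2 3)).trans
        (h.diagonals.le_rpow hκ' (hw _ _) (hd 0 2) (hd 1 3))
  have h13_le : dist (q 1) (q 3) ≤ dist (q 2) (q 3) :=
    (Real.rpow_le_rpow_iff_of_neg (hd 2 3) (hd 1 3) (neg_neg_of_pos hα)).1 <|
      (h.sides.symm.rpow_le hκ (hw _ _) (hd 2 3) (hd 0 1)).trans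
        (h.diagonals.symm.le_rpow hκ' (hw _ _) (hd 1 3) (hd 0 2))
  have hprod := mul_le_mul h02_le h13_le (hd 1 3).le (hd 0 1).le
  rw [← h.ptolemy] at hprod
  exact hprod.not_gt (lt_add_of_pos_right _ (mul_pos (hd 0 3) (hd 1 2)))

theorem stiffness_pos (hm : ∀ i, 0 < m i) (hq : Function.Injective q) (hκ : 0 ≤ κ)
    (h : IsPtolemyCritical (netPull α μ) m κ q) : 0 < μ := by
  have h02 : 0 < dist (q 0) (q 2) := dist_pos.2 (hq.ne (by decide))
  have h13 : 0 < dist (q 1) (q 3) := dist_pos.2 (hq.ne (by decide))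
  exact (Real.rpow_pos_of_pos h02 _).trans_le <|
    h.diagonals.rpow_le (neg_nonpos.2 hκ) (mul_pos (hm 0) (hm 2)) h02 h13

end IsPtolemyCritical

/-- Central configurations for an attraction proportional to `r ^ (1 - α)`, so that `α = 3` is the
Newtonian case. The term `j = i` of the force has the junk coefficient `m i * m i / 0 ^ α`, but
vanishes because `q i - q i = 0`. -/
structure IsCentralConfiguration {ι V : Type*} [Fintype ι] [NormedAddCommGroup V]
    [NormedSpace ℝ V] (α : ℝ) (m : ι → ℝ) (q : ι → V) : Prop where
  injective : Function.Injective q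
  sum_smul_eq_zero : ∑ i, m i • q i = 0
  exists_force_eq : ∃ lam : ℝ, ∀ i,
    (lam * m i) • q i = ∑ j, (m i * m j / dist (q i) (q j) ^ α) • (q j - q i)

namespace IsCentralConfiguration

variable {ι V : Type*} [Fintype ι] [NormedAddCommGroup V] [NormedSpace ℝ V] {α : ℝ} {m : ι → ℝ}
  {q : ι → V}

theorem of_forall_eq_sum_erase [DecidableEq ι] {lam : ℝ} (hq : ∀ i j, i ≠ j → q i ≠ q j)
    (hcm : ∑ i, m i • q i = 0)
    (hcc : ∀ i, (lam * m i) • q i =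
      ∑ j ∈ univ.erase i, ((m i * m j) / ‖q j - q i‖ ^ 3) • (q j - q i)) :
    IsCentralConfiguration 3 m q where
  injective i j hij := by_contra fun hne ↦ hq i j hne hij
  sum_smul_eq_zero := hcm
  exists_force_eq := ⟨lam, fun i ↦ by
    rw [hcc, sum_erase _ (by rw [sub_self, smul_zero])]
    simp only [dist_eq_norm', Real.rpow_ofNat]⟩

theorem exists_sum_smul_sub_eq_zero (hm : ∀ i, 0 < m i) (h : IsCentralConfiguration α m q) :
    ∃ μ : ℝ, ∀ i, ∑ j, (m j * (dist (q i) (q j) ^ (-α) - μ)) • (q j - q i) = 0 := by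
  obtain ⟨lam, hlam⟩ := h.exists_force_eq
  -- As the center of mass is the origin, `q i` is minus the mean of the displacements `q j - q i`.
  refine ⟨-lam / ∑ k, m k, fun i ↦ ?_⟩
  have hM : 0 < ∑ k, m k := sum_pos (fun k _ ↦ hm k) ⟨i, mem_univ i⟩
  have hforce : ∑ j, (m j * dist (q i) (q j) ^ (-α)) • (q j - q i) = lam • q i := by
    refine smul_right_injective V (hm i).ne' ?_
    simp only [smul_sum, smul_smul, mul_comm (m i) lam, hlam]
    exact sum_congr rfl fun j _ ↦ by rw [Real.rpow_neg dist_nonneg, ← mul_assoc, ← div_eq_mul_inv]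
  have hcenter : ∑ j, m j • (q j - q i) = -(∑ k, m k) • q i := by
    rw [neg_smul, ← zero_sub, ← h.sum_smul_eq_zero, sum_smul, ← sum_sub_distrib]
    simp only [smul_sub]
  calc ∑ j, (m j * (dist (q i) (q j) ^ (-α) - -lam / ∑ k, m k)) • (q j - q i)
      = ∑ j, (m j * dist (q i) (q j) ^ (-α)) • (q j - q i) -
          (-lam / ∑ k, m k) • ∑ j, m j • (q j - q i) := by
        simp only [mul_sub, sub_smul, sum_sub_distrib, smul_sum, smul_smul,
          mul_comm (-lam / ∑ k, m k)]
    _ = 0 := by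
        rw [hforce, hcenter, smul_smul, ← sub_smul, neg_div, neg_mul_neg, div_mul_cancel₀ _ hM.ne',
          sub_self, zero_smul]

theorem map {W : Type*} [NormedAddCommGroup W] [NormedSpace ℝ W] (h : IsCentralConfiguration α m q)
    (f : V →ₗᵢ[ℝ] W) : IsCentralConfiguration α m (f ∘ q) where
  injective := f.injective.comp h.injective
  sum_smul_eq_zero := by
    simpa only [map_sum, map_smul, map_zero, Function.comp_apply] using
      congrArg f h.sum_smul_eq_zero
  exists_force_eq := by
    obtain ⟨lam, hlam⟩ := h.exists_force_eq
    refine ⟨lam, fun i ↦ ?_⟩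
    simpa only [map_sum, map_smul, map_sub, Function.comp_apply, f.dist_map] using
      congrArg f (hlam i)

end IsCentralConfiguration

/-- The signed force along the edge `ij` between masses `m i`, `m j` obeying the force law `φ`. -/
def tension {P : Type*} [Dist P] (φ : ℝ → ℝ) (m : Fin 4 → ℝ) (q : Fin 4 → P) (i j : Fin 4) : ℝ :=
  m i * m j * φ (dist (q i) (q j))

theorem tension_comm {P : Type*} [PseudoMetricSpace P] (φ : ℝ → ℝ) (m : Fin 4 → ℝ) (q : Fin 4 → P)
    (i j : Fin 4) : tension φ m q i j = tension φ m q j i := by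
  rw [tension, tension, dist_comm, mul_comm (m i)]

theorem isPtolemyCritical_of_tension {P : Type*} [MetricSpace P] {φ : ℝ → ℝ} {m : Fin 4 → ℝ}
    {q : Fin 4 → P} (hq : Function.Injective q) (hptolemy : PtolemyEq q)
    (h03 : tension φ m q 0 3 * dist (q 2) (q 3) = tension φ m q 0 1 * dist (q 1) (q 2))
    (h02 : tension φ m q 0 2 * dist (q 2) (q 3) = -(tension φ m q 0 1 * dist (q 1) (q 3)))
    (h12 : tension φ m q 1 2 * dist (q 2) (q 3) = tension φ m q 0 1 * dist (q 0) (q 3))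
    (h13 : tension φ m q 1 3 * dist (q 2) (q 3) = -(tension φ m q 0 1 * dist (q 0) (q 2)))
    (h23 : tension φ m q 2 3 * dist (q 1) (q 2) = tension φ m q 0 3 * dist (q 0) (q 1)) :
    IsPtolemyCritical φ m (tension φ m q 0 1 / dist (q 2) (q 3)) q := by
  have hd (i j : Fin 4) (hij : i ≠ j := by decide) : dist (q i) (q j) ≠ 0 :=
    dist_ne_zero.2 (hq.ne hij)
  have h23' : tension φ m q 2 3 * dist (q 2) (q 3) = tension φ m q 0 1 * dist (q 0) (q 1) := by
    refine mul_left_cancel₀ (hd 1 2) ?_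
    linear_combination dist (q 0) (q 1) * h03 + dist (q 2) (q 3) * h23
  have multiplier {t d : ℝ} (ht : t * dist (q 2) (q 3) = tension φ m q 0 1 * d) :
      t = tension φ m q 0 1 / dist (q 2) (q 3) * d := by
    rw [div_mul_eq_mul_div, eq_div_iff (hd 2 3), ht]
  have neg_multiplier {t d : ℝ} (ht : t * dist (q 2) (q 3) = -(tension φ m q 0 1 * d)) :
      t = -(tension φ m q 0 1 / dist (q 2) (q 3)) * d := by
    rw [neg_mul_comm, multiplier (ht.trans (mul_neg _ _).symm)]
  exact ⟨hptolemy, ⟨multiplier rfl, multiplier h23'⟩, ⟨multiplier h03, multiplier h12⟩,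
    ⟨neg_multiplier h02, neg_multiplier h13⟩⟩

section HalfAngle

open Complex ComplexConjugate

attribute [local instance] Complex.finrank_real_complex_fact

local notation "ω" => Complex.orientation.areaForm

theorem sq_sub_sq_eq_areaForm_mul {w z : ℂ} (hw : ‖w‖ = 1) (hz : ‖z‖ = 1) :
    z ^ 2 - w ^ 2 = 2 * I * ω w z * (w * z) := by
  have hww : conj w * w = 1 := by rw [conj_mul', hw]; simp
  have hzz : conj z * z = 1 := by rw [conj_mul', hz]; simp
  have him : conj w * z - conj (conj w * z) = 2 * I * ω w z := by
    rw [Complex.areaForm, sub_conj]; push_cast; ring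
  rw [← him, map_mul, conj_conj]
  linear_combination w ^ 2 * hzz - z ^ 2 * hww

theorem areaForm_mul_areaForm_add (a b c d : ℂ) :
    ω a b * ω c d + ω a d * ω b c = ω a c * ω b d := by
  simp only [Complex.areaForm, mul_im, conj_re, conj_im]
  ring

/-- The points `q i` lie on the circle with center `c` and radius `ρ`, and `w i` is a unit vector at
half the polar angle of `q i`; its sign is arbitrary. -/
structure IsHalfAngleLift {ι : Type*} (c : ℂ) (ρ : ℝ) (w q : ι → ℂ) : Prop where
  radius_pos : 0 < ρ
  norm_eq_one : ∀ i, ‖w i‖ = 1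
  eq_add_mul_sq : ∀ i, q i = c + ρ * w i ^ 2

theorem exists_isHalfAngleLift {ι : Type*} [Nontrivial ι] {q : ι → ℂ} (hq : Function.Injective q)
    (hcosph : EuclideanGeometry.Cospherical (Set.range q)) : ∃ c ρ w, IsHalfAngleLift c ρ w q := by
  obtain ⟨c, ρ, hρ⟩ := hcosph
  rw [Set.forall_mem_range] at hρ
  have hρ_pos : 0 < ρ := by
    obtain ⟨i, j, hij⟩ := exists_pair_ne ι
    refine lt_of_not_ge fun hle ↦ hij (hq ?_)
    rw [dist_le_zero.1 ((hρ i).trans_le hle), dist_le_zero.1 ((hρ j).trans_le hle)]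
  choose w hw using fun i ↦ IsAlgClosed.exists_pow_nat_eq ((q i - c) / ρ) two_pos
  refine ⟨c, ρ, w, hρ_pos, fun i ↦ ?_, fun i ↦ ?_⟩
  · rw [← pow_eq_one_iff_of_nonneg (norm_nonneg _) two_ne_zero, ← norm_pow, hw, norm_div,
      norm_real, Real.norm_of_nonneg hρ_pos.le, ← dist_eq_norm, hρ, div_self hρ_pos.ne']
  · rw [hw, mul_div_cancel₀ _ (ofReal_ne_zero.2 hρ_pos.ne'), add_sub_cancel]

namespace IsHalfAngleLift

variable {ι : Type*} {c : ℂ} {ρ : ℝ} {w q : ι → ℂ}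

theorem sub_eq (h : IsHalfAngleLift c ρ w q) (i j : ι) :
    q j - q i = 2 * I * ρ * w i * (ω (w i) (w j) * w j) := by
  rw [h.eq_add_mul_sq, h.eq_add_mul_sq]
  linear_combination ρ * sq_sub_sq_eq_areaForm_mul (h.norm_eq_one i) (h.norm_eq_one j)

theorem dist_eq (h : IsHalfAngleLift c ρ w q) (i j : ι) :
    dist (q i) (q j) = 2 * ρ * |ω (w i) (w j)| := by
  rw [dist_eq_norm', h.sub_eq]
  simp only [norm_mul, norm_real, norm_I, h.norm_eq_one, RCLike.norm_ofNat,
    Real.norm_of_nonneg h.radius_pos.le, Real.norm_eq_abs, mul_one]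

theorem sum_areaForm_mul_eq_zero [Fintype ι] (h : IsHalfAngleLift c ρ w q) {A : ι → ℝ} {i : ι}
    (hA : ∑ j, A j • (q j - q i) = 0) (k : ι) :
    ∑ j, A j * (ω (w i) (w j) * ω (w j) (w k)) = 0 := by
  have hne : 2 * I * ρ * w i ≠ 0 := by
    have : w i ≠ 0 := norm_ne_zero_iff.1 (by rw [h.norm_eq_one]; exact one_ne_zero)
    simp [this, h.radius_pos.ne']
  have hsum : ∑ j, A j • ω (w i) (w j) • w j = 0 := by
    refine (mul_eq_zero.1 ?_).resolve_left hne
    rw [mul_sum, ← hA]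
    refine sum_congr rfl fun j _ ↦ ?_
    rw [h.sub_eq, mul_smul_comm, real_smul (x := ω (w i) (w j))]
  simpa only [map_sum, map_smul, LinearMap.sum_apply, LinearMap.smul_apply, smul_eq_mul, map_zero,
    LinearMap.zero_apply] using congrArg (fun z ↦ ω z (w k)) hsum

end IsHalfAngleLift

theorem mul_abs_eq_sign_mul_of_mul_eq {p p' x y : ℝ} (h : p * x = p' * y) :
    p * |x| = SignType.sign (x * y) * (p' * |y|) := by
  rw [← sign_mul_self, sign_mul, SignType.coe_mul]
  linear_combination (SignType.sign x : ℝ) * h - p' * SignType.sign x * sign_mul_abs y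

theorem IsHalfAngleLift.tension_mul_dist_eq {α μ : ℝ} {m : Fin 4 → ℝ} {c : ℂ} {ρ : ℝ}
    {w q : Fin 4 → ℂ} (h : IsHalfAngleLift c ρ w q)
    (hbal : ∀ i, ∑ j, (m j * (dist (q i) (q j) ^ (-α) - μ)) • (q j - q i) = 0)
    (i j k l : Fin 4) (hinj : Function.Injective ![i, j, k, l]) :
    tension (netPull α μ) m q i j * dist (q j) (q k) =
      SignType.sign (ω (w i) (w j) * ω (w j) (w k) * (ω (w i) (w l) * ω (w k) (w l))) *
        (tension (netPull α μ) m q i l * dist (q k) (q l)) := by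
  have hjl : m j * (dist (q i) (q j) ^ (-α) - μ) * (ω (w i) (w j) * ω (w j) (w k)) =
      m l * (dist (q i) (q l) ^ (-α) - μ) * (ω (w i) (w l) * ω (w k) (w l)) := by
    -- Pairing the balance at `i` with `w k` removes the terms of `i` and `k`.
    have hsum := h.sum_areaForm_mul_eq_zero (hbal i) k
    rw [← (Finite.injective_iff_bijective.1 hinj).sum_comp, Fin.sum_univ_four] at hsum
    simp only [Matrix.cons_val] at hsum
    rw [Orientation.areaForm_apply_self, Orientation.areaForm_apply_self,
      Orientation.areaForm_swap _ (w l) (w k)] at hsum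
    linarith
  have habs := mul_abs_eq_sign_mul_of_mul_eq hjl
  rw [abs_mul, abs_mul] at habs
  have expand (i j k l : Fin 4) : tension (netPull α μ) m q i j * dist (q k) (q l) =
      m i * (2 * ρ) ^ 2 *
        (m j * (dist (q i) (q j) ^ (-α) - μ) * (|ω (w i) (w j)| * |ω (w k) (w l)|)) := by
    rw [tension, netPull, h.dist_eq k l]
    nth_rw 2 [h.dist_eq i j]
    ring
  rw [expand i j j k, expand i l k l, habs]
  ring

theorem mul_pos_of_abs_add_eq_abs_add {a b : ℝ} (ha : a ≠ 0) (hb : b ≠ 0)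
    (h : |a + b| = |a| + |b|) : 0 < a * b := by
  rcases (abs_add_eq_add_abs_iff a b).1 h with ⟨ha₀, hb₀⟩ | ⟨ha₀, hb₀⟩
  · exact mul_pos (ha₀.lt_of_ne' ha) (hb₀.lt_of_ne' hb)
  · exact mul_pos_of_neg_of_neg (ha₀.lt_of_ne ha) (hb₀.lt_of_ne hb)

namespace IsHalfAngleLift

variable {c : ℂ} {ρ : ℝ} {w q : Fin 4 → ℂ}

theorem areaForm_mul_pos (h : IsHalfAngleLift c ρ w q) (hq : Function.Injective q)
    (hptolemy : PtolemyEq q) :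
    0 < ω (w 0) (w 1) * ω (w 2) (w 3) * (ω (w 0) (w 3) * ω (w 1) (w 2)) := by
  have hne {i j : Fin 4} (hij : i ≠ j) : ω (w i) (w j) ≠ 0 := fun h₀ ↦ by
    simpa [h₀, hq.ne hij] using h.dist_eq i j
  refine mul_pos_of_abs_add_eq_abs_add (mul_ne_zero (hne (by decide)) (hne (by decide)))
    (mul_ne_zero (hne (by decide)) (hne (by decide))) ?_
  have hρ : (2 * ρ) ^ 2 ≠ 0 := pow_ne_zero 2 (mul_pos two_pos h.radius_pos).ne'
  simp only [PtolemyEq, h.dist_eq] at hptolemy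
  rw [areaForm_mul_areaForm_add, abs_mul, abs_mul, abs_mul]
  refine mul_left_cancel₀ hρ ?_
  linear_combination -hptolemy

theorem exists_isPtolemyCritical {α μ : ℝ} {m : Fin 4 → ℝ} (h : IsHalfAngleLift c ρ w q)
    (hq : Function.Injective q) (hptolemy : PtolemyEq q)
    (hbal : ∀ i, ∑ j, (m j * (dist (q i) (q j) ^ (-α) - μ)) • (q j - q i) = 0) :
    ∃ κ, IsPtolemyCritical (netPull α μ) m κ q := by
  let T := tension (netPull α μ) m q
  have hab := h.areaForm_mul_pos hq hptolemy
  have hac : 0 < ω (w 0) (w 1) * ω (w 2) (w 3) * (ω (w 0) (w 2) * ω (w 1) (w 3)) := by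
    rw [← areaForm_mul_areaForm_add (w 0) (w 1) (w 2) (w 3), mul_add]
    exact add_pos_of_nonneg_of_pos (mul_self_nonneg _) hab
  have swap (i j : Fin 4) : ω (w i) (w j) = -ω (w j) (w i) := Orientation.areaForm_swap _ _ _
  have comm (i j : Fin 4) : T i j = T j i := tension_comm ..
  have t03 : T 0 3 * dist (q 2) (q 3) = T 0 1 * dist (q 1) (q 2) := by
    rw [h.tension_mul_dist_eq hbal 0 1 2 3 (by decide), sign_pos (by linarith), SignType.coe_one,
      one_mul]
  have t02 : T 0 2 * dist (q 2) (q 3) = -(T 0 1 * dist (q 1) (q 3)) := by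
    rw [h.tension_mul_dist_eq hbal 0 1 3 2 (by decide), sign_neg (by rw [swap 3 2]; linarith),
      SignType.coe_neg_one, neg_one_mul, neg_neg, dist_comm (q 3)]
  have t12 : T 1 2 * dist (q 2) (q 3) = T 0 1 * dist (q 0) (q 3) := by
    rw [comm 0 1, h.tension_mul_dist_eq hbal 1 0 3 2 (by decide),
      sign_pos (by rw [swap 1 0, swap 3 2]; linarith), SignType.coe_one, one_mul, dist_comm (q 3)]
  have t13 : T 1 3 * dist (q 2) (q 3) = -(T 0 1 * dist (q 0) (q 2)) := by
    rw [comm 0 1, h.tension_mul_dist_eq hbal 1 0 2 3 (by decide),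
      sign_neg (by rw [swap 1 0]; linarith), SignType.coe_neg_one, neg_one_mul, neg_neg]
  have t23 : T 2 3 * dist (q 1) (q 2) = T 0 3 * dist (q 0) (q 1) := by
    rw [comm 0 3, comm 2 3, h.tension_mul_dist_eq hbal 3 0 1 2 (by decide),
      sign_pos (by rw [swap 3 0, swap 3 2]; linarith), SignType.coe_one, one_mul]
  exact ⟨_, isPtolemyCritical_of_tension hq hptolemy t03 t02 t12 t13 t23⟩

end IsHalfAngleLift

end HalfAngle

theorem IsCentralConfiguration.exists_isPtolemyCritical {V : Type*} [NormedAddCommGroup V]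
    [InnerProductSpace ℝ V] (hV : Module.finrank ℝ V = 2) {α : ℝ} {m : Fin 4 → ℝ} {q : Fin 4 → V}
    (hm : ∀ i, 0 < m i) (h : IsCentralConfiguration α m q)
    (hcosph : EuclideanGeometry.Cospherical (Set.range q)) (hptolemy : PtolemyEq q) :
    ∃ μ κ, IsPtolemyCritical (netPull α μ) m κ q := by
  have : FiniteDimensional ℝ V := .of_finrank_pos (by omega)
  let f : V ≃ₗᵢ[ℝ] ℂ := (stdOrthonormalBasis ℝ V).equiv Complex.orthonormalBasisOneI (finCongr hV)
  have hf (i j : Fin 4) : dist (f (q i)) (f (q j)) = dist (q i) (q j) := f.dist_map _ _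
  have hfq := h.map f.toLinearIsometry
  obtain ⟨μ, hμ⟩ := hfq.exists_sum_smul_sub_eq_zero hm
  obtain ⟨c, ρ, w, hw⟩ := exists_isHalfAngleLift hfq.injective
    (Set.range_comp f q ▸ f.isometry.cospherical hcosph)
  obtain ⟨κ, hκ⟩ := hw.exists_isPtolemyCritical hfq.injective
    (by simpa [PtolemyEq, hf] using hptolemy) hμ
  exact ⟨μ, κ, hptolemy, by simpa [hf] using hκ.sides, by simpa [hf] using hκ.sides',
    by simpa [hf] using hκ.diagonals⟩

theorem cocircular_cc_unique_up_to_similarity_general {V : Type*} [NormedAddCommGroup V]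
    [InnerProductSpace ℝ V] (hV : Module.finrank ℝ V = 2) {α : ℝ} (hα : 2 ≤ α)
    {m : Fin 4 → ℝ} (hm : ∀ i, 0 < m i) {q q' : Fin 4 → V}
    (hq : IsCentralConfiguration α m q) (hq' : IsCentralConfiguration α m q')
    (hcosph : EuclideanGeometry.Cospherical (Set.range q))
    (hcosph' : EuclideanGeometry.Cospherical (Set.range q'))
    (hptolemy : PtolemyEq q) (hptolemy' : PtolemyEq q') :
    ∃ (k : ℝ) (R : V ≃ₗᵢ[ℝ] V), k ≠ 0 ∧ ∀ i, q' i = k • R (q i) := by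
  have : FiniteDimensional ℝ V := .of_finrank_pos (by omega)
  have hα_pos : 0 < α := by linarith
  obtain ⟨μ, κ, h⟩ := hq.exists_isPtolemyCritical hV hm hcosph hptolemy
  obtain ⟨μ', κ', h'⟩ := hq'.exists_isPtolemyCritical hV hm hcosph' hptolemy'
  have hκ := h.multiplier_pos hα_pos hm hq.injective
  have hκ' := h'.multiplier_pos hα_pos hm hq'.injective
  have hμ := h.stiffness_pos hm hq.injective hκ.le
  have hμ' := h'.stiffness_pos hm hq'.injective hκ'.le
  obtain ⟨k, hk, hkμ⟩ : ∃ k : ℝ, 0 < k ∧ μ' * k ^ α = μ :=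
    ⟨(μ / μ') ^ α⁻¹, by positivity, by
      rw [Real.rpow_inv_rpow (by positivity) hα_pos.ne', mul_div_cancel₀ _ hμ'.ne']⟩
  have hcongr : Congruent (k • q) q' :=
    (hkμ ▸ h).smul hk |>.congruent (strictAntiOn_mul_netPull hα hμ') hm
      (by positivity) hκ'.le ((smul_right_injective V hk.ne').comp hq.injective) hq'.injective h'
  obtain ⟨R, hR⟩ := exists_linearIsometryEquiv_of_congruent
    (sum_pos (fun i _ ↦ hm i) univ_nonempty).ne'
    (by simp only [Pi.smul_apply, smul_comm _ k, ← smul_sum, hq.sum_smul_eq_zero, smul_zero])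
    hq'.sum_smul_eq_zero hcongr
  exact ⟨k, R, hk.ne', fun i ↦ by rw [← hR, Pi.smul_apply, map_smul]⟩

/-- Any two sequentially-ordered co-circular planar central configurations of
four bodies with the same positive masses are similar: they differ by a
nonzero scaling and a linear isometry. -/
theorem cocircular_cc_unique_up_to_similarity
    (m : Fin 4 → ℝ) (hm : ∀ i, 0 < m i)
    (q q' : Fin 4 → EuclideanSpace ℝ (Fin 2))
    (hq : ∀ i j, i ≠ j → q i ≠ q j) (hq' : ∀ i j, i ≠ j → q' i ≠ q' j)
    (hcm : ∑ i, m i • q i = 0) (hcm' : ∑ i, m i • q' i = 0)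
    (lam lam' : ℝ)
    (hcc : ∀ i, (lam * m i) • q i =
      ∑ j ∈ Finset.univ.erase i, ((m i * m j) / ‖q j - q i‖^3) • (q j - q i))
    (hcc' : ∀ i, (lam' * m i) • q' i =
      ∑ j ∈ Finset.univ.erase i, ((m i * m j) / ‖q' j - q' i‖^3) • (q' j - q' i))
    (hcirc : ∃ (c : EuclideanSpace ℝ (Fin 2)) (ρ : ℝ), ∀ i, dist (q i) c = ρ)
    (hcirc' : ∃ (c' : EuclideanSpace ℝ (Fin 2)) (ρ' : ℝ), ∀ i, dist (q' i) c' = ρ')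
    (hptol : ‖q 0 - q 1‖ * ‖q 2 - q 3‖ + ‖q 0 - q 3‖ * ‖q 1 - q 2‖
      = ‖q 0 - q 2‖ * ‖q 1 - q 3‖)
    (hptol' : ‖q' 0 - q' 1‖ * ‖q' 2 - q' 3‖ + ‖q' 0 - q' 3‖ * ‖q' 1 - q' 2‖
      = ‖q' 0 - q' 2‖ * ‖q' 1 - q' 3‖) :
    ∃ (k : ℝ) (R : EuclideanSpace ℝ (Fin 2) ≃ₗᵢ[ℝ] EuclideanSpace ℝ (Fin 2)),
      k ≠ 0 ∧ ∀ i, q' i = k • R (q i) := by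
  exact cocircular_cc_unique_up_to_similarity_general finrank_euclideanSpace_fin (by norm_num) hm
    (.of_forall_eq_sum_erase hq hcm hcc) (.of_forall_eq_sum_erase hq' hcm' hcc')
    (hcirc.imp fun _ ↦ Exists.imp fun _ ↦ Set.forall_mem_range.2)
    (hcirc'.imp fun _ ↦ Exists.imp fun _ ↦ Set.forall_mem_range.2)
    (by simpa only [PtolemyEq, dist_eq_norm] using hptol)
    (by simpa only [PtolemyEq, dist_eq_norm] using hptol')
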